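/- arXiv:1909.09707 — 7 statements merged into one kernel-verified Lean document; each statement's English description precedes it below -/
import Mathlib

section
/- Let k ≥ 1 be an integer and c : Fin k → ℝ with c i > 0 for all i. The circle group Circle acts on the orbit space O of the snake linkage by pointwise multiplication, u • A = (fun j => u · A j), and this action maps O to itself. The quotient topological space of O by the orbit equivalence relation of this action is homeomorphic to the (k−1)-torus Fin (k−1) → Circle. -/
/-- The orbit space of the snake linkage: placements of the vertices
`A 0, …, A k` in the plane `ℂ` with `A 0 = 0` and prescribed bar lengths. -/
def snakeOrbitSpace (k : ℕ) (c : Fin k → ℝ) : Set (Fin (k + 1) → ℂ) :=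
  {A | A 0 = 0 ∧ ∀ i : Fin k, ‖A i.succ - A i.castSucc‖ = c i}

/-- The orbit equivalence relation of the rotation action of `Circle` on the
orbit space of the snake linkage (pointwise multiplication). -/
def snakeRotSetoid (k : ℕ) (c : Fin k → ℝ) : Setoid (snakeOrbitSpace k c) where
  r := fun A B => ∃ u : Circle, (fun j => (u : ℂ) * (A : Fin (k + 1) → ℂ) j) = (B : Fin (k + 1) → ℂ)
  iseqv := by
    constructor
    · intro A
      exact ⟨1, by simp⟩
    · rintro A B ⟨u, hu⟩
      refine ⟨u⁻¹, ?_⟩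
      funext j
      have h := congrFun hu j
      change (u : ℂ) * (A : Fin (k + 1) → ℂ) j = (B : Fin (k + 1) → ℂ) j at h
      change ((u⁻¹ : Circle) : ℂ) * (B : Fin (k + 1) → ℂ) j = (A : Fin (k + 1) → ℂ) j
      rw [← h, Circle.coe_inv, ← mul_assoc, inv_mul_cancel₀ (Circle.coe_ne_zero u), one_mul]
    · rintro A B C ⟨u, hu⟩ ⟨v, hv⟩
      refine ⟨v * u, ?_⟩
      funext j
      have h1 := congrFun hu j
      have h2 := congrFun hv j
      change (u : ℂ) * (A : Fin (k + 1) → ℂ) j = (B : Fin (k + 1) → ℂ) j at h1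
      change (v : ℂ) * (B : Fin (k + 1) → ℂ) j = (C : Fin (k + 1) → ℂ) j at h2
      change ((v * u : Circle) : ℂ) * (A : Fin (k + 1) → ℂ) j = (C : Fin (k + 1) → ℂ) j
      rw [Circle.coe_mul, ← h2, ← h1]
      ring


/-- Direction of the `i`-th bar. -/
noncomputable def snakeDir (k : ℕ) (c : Fin k → ℝ) (hc : ∀ i, 0 < c i)
    (A : snakeOrbitSpace k c) (i : Fin k) : Circle :=
  ⟨(A.1 i.succ - A.1 i.castSucc) / (c i : ℂ), by
    rw [Submonoid.unitSphere, ← SetLike.mem_coe]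
    change _ ∈ Metric.sphere (0 : ℂ) 1
    rw [mem_sphere_zero_iff_norm, norm_div, A.2.2 i, Complex.norm_real, Real.norm_eq_abs,
      abs_of_pos (hc i), div_self (hc i).ne']⟩

lemma snakeDir_coe (k : ℕ) (c : Fin k → ℝ) (hc : ∀ i, 0 < c i)
    (A : snakeOrbitSpace k c) (i : Fin k) :
    (snakeDir k c hc A i : ℂ) = (A.1 i.succ - A.1 i.castSucc) / (c i : ℂ) := rfl

lemma snakeDir_continuous (k : ℕ) (c : Fin k → ℝ) (hc : ∀ i, 0 < c i) (i : Fin k) :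
    Continuous (fun A : snakeOrbitSpace k c => snakeDir k c hc A i) := by
  refine Continuous.subtype_mk ?_ _
  refine Continuous.div_const ?_ _
  exact ((continuous_apply _).comp continuous_subtype_val).sub
    ((continuous_apply _).comp continuous_subtype_val)

/-- Snake with given bar directions. -/
noncomputable def snakeBuild (k : ℕ) (c : Fin k → ℝ) (hc : ∀ i, 0 < c i)
    (s : Fin k → Circle) : snakeOrbitSpace k c :=
  ⟨Fin.partialSum (fun i => (c i : ℂ) * (s i : ℂ)), by
    refine ⟨Fin.partialSum_zero _, fun i => ?_⟩
    rw [Fin.partialSum_succ, add_sub_cancel_left, norm_mul, Circle.norm_coe, mul_one,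
      Complex.norm_real, Real.norm_eq_abs, abs_of_pos (hc i)]⟩

lemma snakeBuild_continuous (k : ℕ) (c : Fin k → ℝ) (hc : ∀ i, 0 < c i) :
    Continuous (snakeBuild k c hc) := by
  refine Continuous.subtype_mk (continuous_pi fun j => ?_) _
  induction j using Fin.induction with
  | zero => simpa only [Fin.partialSum_zero] using continuous_const
  | succ j ih =>
    simp only [Fin.partialSum_succ]
    exact ih.add (continuous_const.mul (continuous_subtype_val.comp (continuous_apply j)))

lemma snakeDir_build (k : ℕ) (c : Fin k → ℝ) (hc : ∀ i, 0 < c i)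
    (s : Fin k → Circle) (i : Fin k) : snakeDir k c hc (snakeBuild k c hc s) i = s i := by
  apply Circle.ext
  have h : (c i : ℂ) ≠ 0 := by exact_mod_cast (hc i).ne'
  rw [snakeDir_coe]
  simp only [snakeBuild, Fin.partialSum_succ, add_sub_cancel_left]
  exact mul_div_cancel_left₀ _ h

lemma snakeDir_rot (k : ℕ) (c : Fin k → ℝ) (hc : ∀ i, 0 < c i)
    (A B : snakeOrbitSpace k c) (u : Circle)
    (h : (fun j => (u : ℂ) * A.1 j) = B.1) (i : Fin k) :
    snakeDir k c hc B i = u * snakeDir k c hc A i := by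
  apply Circle.ext
  rw [Circle.coe_mul, snakeDir_coe, snakeDir_coe, ← h]
  ring

theorem snake_configuration_space_is_torus (k : ℕ) (hk : 1 ≤ k)
    (c : Fin k → ℝ) (hc : ∀ i, 0 < c i) :
    (∀ (u : Circle) (A : Fin (k + 1) → ℂ), A ∈ snakeOrbitSpace k c →
      (fun j => (u : ℂ) * A j) ∈ snakeOrbitSpace k c) ∧
    Nonempty (Quotient (snakeRotSetoid k c) ≃ₜ (Fin (k - 1) → Circle)) := by
  constructor
  · rintro u A ⟨h0, h1⟩
    refine ⟨by simp [h0], fun i => ?_⟩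
    rw [← mul_sub, norm_mul, Circle.norm_coe, one_mul, h1]
  obtain ⟨n, rfl⟩ : ∃ n, k = n + 1 := ⟨k - 1, by omega⟩
  change Nonempty (Quotient (snakeRotSetoid (n + 1) c) ≃ₜ (Fin n → Circle))
  let f : snakeOrbitSpace (n + 1) c → (Fin n → Circle) := fun A i =>
    snakeDir _ c hc A i.succ / snakeDir _ c hc A 0
  have hf : Continuous f := continuous_pi fun i =>
    (snakeDir_continuous _ c hc i.succ).div' (snakeDir_continuous _ c hc 0)
  let g : (Fin n → Circle) → snakeOrbitSpace (n + 1) c := fun t =>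
    snakeBuild _ c hc (Fin.cons 1 t)
  have hcons : Continuous (fun t : Fin n → Circle => (Fin.cons 1 t : Fin (n + 1) → Circle)) := by
    refine continuous_pi fun i => ?_
    refine Fin.cases ?_ (fun j => ?_) i
    · simpa only [Fin.cons_zero] using continuous_const
    · simpa only [Fin.cons_succ] using continuous_apply j
  have hg : Continuous g := (snakeBuild_continuous _ c hc).comp hcons
  have hfr : ∀ A B, (snakeRotSetoid (n + 1) c).r A B → f A = f B := by
    rintro A B ⟨u, hu⟩
    funext i
    simp only [f, snakeDir_rot _ c hc A B u hu, mul_div_mul_left_eq_div]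
  exact ⟨{
    toFun := Quotient.lift f hfr
    invFun := fun t => Quotient.mk _ (g t)
    left_inv := by
      intro q
      induction q using Quotient.inductionOn with
      | h A =>
      refine Quotient.sound ⟨snakeDir _ c hc A 0, ?_⟩
      have key : ∀ i, snakeDir _ c hc A 0 * (Fin.cons 1 (f A) : Fin (n + 1) → Circle) i
          = snakeDir _ c hc A i := by
        intro i
        refine Fin.cases ?_ (fun j => ?_) i
        · simp
        · simp [f]
      funext j
      change (snakeDir _ c hc A 0 : ℂ) * (g (f A)).1 j = A.1 j
      induction j using Fin.induction with
      | zero => rw [(g (f A)).2.1, A.2.1, mul_zero]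
      | succ i ih =>
        have h1 : (g (f A)).1 i.succ = (g (f A)).1 i.castSucc
            + (c i : ℂ) * ((Fin.cons 1 (f A) : Fin (n + 1) → Circle) i : ℂ) :=
          Fin.partialSum_succ _ _
        have h2 := congrArg (fun z : Circle => (z : ℂ)) (key i)
        simp only [Circle.coe_mul] at h2
        rw [snakeDir_coe _ c hc A i] at h2
        have h : (c i : ℂ) ≠ 0 := by exact_mod_cast (hc i).ne'
        rw [h1, mul_add, ih, mul_left_comm, h2, mul_div_cancel₀ _ h]
        ring
    right_inv := by
      intro t
      funext i
      change snakeDir _ c hc (g t) i.succ / snakeDir _ c hc (g t) 0 = t i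
      simp only [g, snakeDir_build, Fin.cons_succ, Fin.cons_zero, div_one]
    continuous_toFun := hf.quotient_lift _
    continuous_invFun := continuous_quotient_mk'.comp hg }⟩
end

section
/- (Maximal value of the diagonal on the hexagon configuration space.) Let ℓ : Fin 6 → ℝ satisfy 0 < ℓ i for all i, ℓ 0 ≤ ℓ 1 ≤ ℓ 2 ≤ ℓ 3 ≤ ℓ 4 ≤ ℓ 5, and ℓ 5 ≤ ℓ 0 + ℓ 1 + ℓ 2 + ℓ 3 + ℓ 4. Then the set {d : ℝ | there exists a hexagon realization A with side lengths ℓ and dist (A 0) (A 3) = d} has greatest element ℓ 0 + ℓ 1 + ℓ 2; that is, every realization satisfies dist (A 0) (A 3) ≤ ℓ 0 + ℓ 1 + ℓ 2, and this value is attained by some realization. -/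
/-- A hexagon realization in the plane `ℂ` with side lengths `ℓ`. -/
def IsHexagonRealization (ℓ : Fin 6 → ℝ) (A : Fin 6 → ℂ) : Prop :=
  ∀ i : Fin 6, dist (A i) (A (i + 1)) = ℓ i

theorem tri_aux (e a b : ℝ) (he : 0 < e) (ha : 0 ≤ a) (hb : 0 ≤ b)
    (h1 : e ≤ a + b) (h2 : a ≤ e + b) (h3 : b ≤ e + a) :
    ∃ w : ℂ, ‖w‖ = a ∧ ‖w - e‖ = b := by
  obtain ⟨x, hx⟩ : ∃ x : ℝ, 2 * e * x = a ^ 2 - b ^ 2 + e ^ 2 :=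
    ⟨(a ^ 2 - b ^ 2 + e ^ 2) / (2 * e), by field_simp⟩
  have hxa : x ≤ a := by
    have : 0 ≤ (b - (e - a)) * (b + (e - a)) := mul_nonneg (by linarith) (by linarith)
    by_contra! h
    nlinarith
  have hxa' : -a ≤ x := by
    have : 0 ≤ (a + e - b) * (a + e + b) := mul_nonneg (by linarith) (by linarith)
    by_contra! h
    nlinarith
  have hy : 0 ≤ a ^ 2 - x ^ 2 := by nlinarith
  have hs := Real.sq_sqrt hy
  refine ⟨⟨x, Real.sqrt (a ^ 2 - x ^ 2)⟩, ?_, ?_⟩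
  · rw [← sq_eq_sq₀ (norm_nonneg _) ha, Complex.sq_norm, Complex.normSq_apply]
    simp only
    nlinarith
  · rw [← sq_eq_sq₀ (norm_nonneg _) hb, Complex.sq_norm, Complex.normSq_apply]
    simp only [Complex.sub_re, Complex.sub_im, Complex.ofReal_re, Complex.ofReal_im]
    nlinarith

theorem tri_aux2 (P Q : ℂ) (e a b : ℝ) (hPQ : dist P Q = e) (he : 0 < e) (ha : 0 ≤ a)
    (hb : 0 ≤ b) (h1 : e ≤ a + b) (h2 : a ≤ e + b) (h3 : b ≤ e + a) :
    ∃ R : ℂ, dist P R = a ∧ dist R Q = b := by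
  obtain ⟨w, hw1, hw2⟩ := tri_aux e a b he ha hb h1 h2 h3
  have hec : (e : ℂ) ≠ 0 := by exact_mod_cast he.ne'
  have hu : ‖(Q - P) / (e : ℂ)‖ = 1 := by
    rw [norm_div, ← dist_eq_norm, dist_comm, hPQ, Complex.norm_real, Real.norm_of_nonneg he.le,
      div_self he.ne']
  refine ⟨P + (Q - P) / e * w, ?_, ?_⟩
  · rw [dist_comm, dist_eq_norm, add_sub_cancel_left, norm_mul, hu, hw1, one_mul]
  · have : P + (Q - P) / e * w - Q = (Q - P) / e * (w - e) := by
      field_simp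
      ring
    rw [dist_eq_norm, this, norm_mul, hu, hw2, one_mul]

/-- The maximal value of the diagonal `|A₀A₃|` on the configuration space of a
hexagon with ordered side lengths is `ℓ 0 + ℓ 1 + ℓ 2`. -/
theorem hexagon_diagonal_max (ℓ : Fin 6 → ℝ) (hpos : ∀ i, 0 < ℓ i)
    (h01 : ℓ 0 ≤ ℓ 1) (h12 : ℓ 1 ≤ ℓ 2) (h23 : ℓ 2 ≤ ℓ 3)
    (h34 : ℓ 3 ≤ ℓ 4) (h45 : ℓ 4 ≤ ℓ 5)
    (hne : ℓ 5 ≤ ℓ 0 + ℓ 1 + ℓ 2 + ℓ 3 + ℓ 4) :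
    IsGreatest {d : ℝ | ∃ A : Fin 6 → ℂ,
        IsHexagonRealization ℓ A ∧ dist (A 0) (A 3) = d}
      (ℓ 0 + ℓ 1 + ℓ 2) := by
  have p0 := hpos 0
  have p1 := hpos 1
  have p2 := hpos 2
  have p3 := hpos 3
  have p4 := hpos 4
  have p5 := hpos 5
  constructor
  · obtain ⟨D, hD⟩ : ∃ D, D = ℓ 0 + ℓ 1 + ℓ 2 := ⟨_, rfl⟩
    obtain ⟨e, he, e1, e2, e3⟩ : ∃ e : ℝ, 0 < e ∧ e ≤ ℓ 3 + ℓ 4 ∧ e ≤ D + ℓ 5 ∧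
        (e = ℓ 3 + ℓ 4 ∨ e = D + ℓ 5) := by
      rcases le_total (ℓ 3 + ℓ 4) (D + ℓ 5) with h | h
      · exact ⟨_, by linarith, le_rfl, h, Or.inl rfl⟩
      · exact ⟨_, by linarith, h, le_rfl, Or.inr rfl⟩
    have nr : ∀ r : ℝ, 0 < r → ‖(r : ℂ)‖ = r := fun r hr => by
      rw [Complex.norm_real, Real.norm_of_nonneg hr.le]
    obtain ⟨X, hX1, hX2⟩ := tri_aux2 0 (D : ℂ) D (ℓ 5) e
      (by rw [dist_comm, dist_zero_right]; exact nr D (by linarith)) (by linarith) p5.le he.le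
      (by rcases e3 with h | h <;> linarith) (by rcases e3 with h | h <;> linarith)
      (by linarith)
    obtain ⟨Y, hY1, hY2⟩ := tri_aux2 (D : ℂ) X e (ℓ 3) (ℓ 4)
      (by rw [dist_comm]; exact hX2) he p3.le p4.le e1
      (by linarith) (by rcases e3 with h | h <;> linarith)
    refine ⟨![0, (ℓ 0 : ℂ), (ℓ 0 + ℓ 1 : ℂ), (D : ℂ), Y, X], ?_, ?_⟩
    · intro i
      fin_cases i
      · change dist (0 : ℂ) (ℓ 0 : ℂ) = ℓ 0
        rw [dist_comm, dist_zero_right, nr _ p0]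
      · change dist (ℓ 0 : ℂ) (ℓ 0 + ℓ 1 : ℂ) = ℓ 1
        rw [dist_comm, dist_eq_norm, add_sub_cancel_left, nr _ p1]
      · change dist (ℓ 0 + ℓ 1 : ℂ) (D : ℂ) = ℓ 2
        rw [dist_comm, dist_eq_norm, hD]
        push_cast
        rw [add_sub_cancel_left, nr _ p2]
      · exact hY1
      · exact hY2
      · change dist X 0 = ℓ 5
        rw [dist_comm]
        exact hX1
    · change dist (0 : ℂ) (D : ℂ) = _
      rw [dist_comm, dist_zero_right, nr _ (by linarith), hD]
  · rintro d ⟨A, hA, rfl⟩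
    have a0 : dist (A 0) (A 1) = ℓ 0 := hA 0
    have a1 : dist (A 1) (A 2) = ℓ 1 := hA 1
    have a2 : dist (A 2) (A 3) = ℓ 2 := hA 2
    have t1 := dist_triangle (A 0) (A 1) (A 2)
    have t2 := dist_triangle (A 0) (A 2) (A 3)
    linarith
end

section
/- (Minimal value of the diagonal on the hexagon configuration space.) Let ℓ : Fin 6 → ℝ satisfy 0 < ℓ i for all i, ℓ 0 ≤ ℓ 1 ≤ ℓ 2 ≤ ℓ 3 ≤ ℓ 4 ≤ ℓ 5, and ℓ 5 ≤ ℓ 0 + ℓ 1 + ℓ 2 + ℓ 3 + ℓ 4. Then the set {d : ℝ | there exists a hexagon realization A with side lengths ℓ and dist (A 0) (A 3) = d} has least element max(0, max(ℓ 2 − ℓ 1 − ℓ 0, ℓ 5 − ℓ 4 − ℓ 3)); that is, every realization satisfies dist (A 0) (A 3) ≥ max(0, ℓ 2 − ℓ 1 − ℓ 0, ℓ 5 − ℓ 4 − ℓ 3), and this value is attained by some realization. -/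
theorem hex_tri (u v : ℂ) (a b : ℝ) (ha : 0 ≤ a) (hb : 0 ≤ b) (h1 : a ≤ b + dist u v)
    (h2 : b ≤ a + dist u v) (h3 : dist u v ≤ a + b) :
    ∃ P : ℂ, dist u P = a ∧ dist P v = b := by
  by_cases huv : u = v
  · subst huv
    have hab : a = b := by
      rw [dist_self] at h1 h2
      linarith
    subst hab
    refine ⟨u + (a : ℂ), ?_, ?_⟩ <;> simp [dist_eq_norm, abs_of_nonneg ha]
  · obtain ⟨x, hx⟩ : ∃ x, x = dist u v := ⟨_, rfl⟩
    have hx0 : 0 < x := by rw [hx]; exact dist_pos.mpr huv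
    rw [← hx] at h1 h2 h3
    obtain ⟨s, hs⟩ : ∃ s, s = (a ^ 2 + x ^ 2 - b ^ 2) / (2 * x) := ⟨_, rfl⟩
    have hs' : 2 * x * s = a ^ 2 + x ^ 2 - b ^ 2 := by rw [hs]; field_simp
    have hle : s ^ 2 ≤ a ^ 2 := by
      apply sq_le_sq'
      · have : 0 ≤ 2 * x * (s + a) := by nlinarith
        have := nonneg_of_mul_nonneg_right this (by positivity)
        linarith
      · have : 0 ≤ 2 * x * (a - s) := by nlinarith
        have := nonneg_of_mul_nonneg_right this (by positivity)
        linarith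
    obtain ⟨t, ht⟩ : ∃ t, t = Real.sqrt (a ^ 2 - s ^ 2) := ⟨_, rfl⟩
    have ht2 : t ^ 2 = a ^ 2 - s ^ 2 := by rw [ht]; exact Real.sq_sqrt (by linarith)
    have hxc : (x : ℂ) ≠ 0 := by exact_mod_cast hx0.ne'
    have hw : ‖(v - u) / (x : ℂ)‖ = 1 := by
      rw [norm_div, ← dist_eq_norm, dist_comm, ← hx, Complex.norm_real, Real.norm_eq_abs,
        abs_of_pos hx0, div_self hx0.ne']
    have n1 : ‖(⟨s, t⟩ : ℂ)‖ = a := by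
      rw [Complex.norm_def, Real.sqrt_eq_iff_mul_self_eq (Complex.normSq_nonneg _) ha,
        Complex.normSq_mk]
      linarith
    have n2 : ‖(⟨s - x, t⟩ : ℂ)‖ = b := by
      rw [Complex.norm_def, Real.sqrt_eq_iff_mul_self_eq (Complex.normSq_nonneg _) hb,
        Complex.normSq_mk]
      linarith
    refine ⟨u + ⟨s, t⟩ * ((v - u) / x), ?_, ?_⟩
    · rw [dist_comm, dist_eq_norm, add_sub_cancel_left, norm_mul, hw, n1, mul_one]
    · have : u + ⟨s, t⟩ * ((v - u) / x) - v = (⟨s - x, t⟩ : ℂ) * ((v - u) / x) := by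
        have e : (⟨s - x, t⟩ : ℂ) = ⟨s, t⟩ - (x : ℂ) := by
          apply Complex.ext <;> simp
        rw [e]
        field_simp
        ring
      rw [dist_eq_norm, this, norm_mul, hw, n2, mul_one]

theorem hex_quad (u v : ℂ) (a b c : ℝ) (ha : 0 ≤ a) (hb : 0 ≤ b) (hc : 0 ≤ c)
    (h1 : a ≤ b + c + dist u v) (h2 : b ≤ a + c + dist u v) (h3 : c ≤ a + b + dist u v)
    (h4 : dist u v ≤ a + b + c) :
    ∃ P Q : ℂ, dist u P = a ∧ dist P Q = b ∧ dist Q v = c := by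
  have hd : 0 ≤ dist u v := dist_nonneg
  obtain ⟨x, hx⟩ : ∃ x, x = max |a - b| |c - dist u v| := ⟨_, rfl⟩
  have k1 : |a - b| ≤ x := hx ▸ le_max_left _ _
  have k2 : |c - dist u v| ≤ x := hx ▸ le_max_right _ _
  have k3 : x ≤ a + b := by
    rw [hx]; apply max_le <;> rw [abs_le] <;> constructor <;> linarith
  have k4 : x ≤ c + dist u v := by
    rw [hx]; apply max_le <;> rw [abs_le] <;> constructor <;> linarith
  have hx0 : 0 ≤ x := (abs_nonneg _).trans k1
  rw [abs_le] at k1 k2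
  obtain ⟨Q, hQ1, hQ2⟩ := hex_tri u v x c hx0 hc (by linarith) (by linarith) (by linarith)
  obtain ⟨P, hP1, hP2⟩ := hex_tri u Q a b ha hb (by linarith) (by linarith) (by linarith)
  exact ⟨P, Q, hP1, hP2, hQ2⟩

/-- The minimal value of the diagonal `|A₀A₃|` on the configuration space of a
hexagon with ordered side lengths is `max 0 (max (ℓ 2 - ℓ 1 - ℓ 0) (ℓ 5 - ℓ 4 - ℓ 3))`. -/
theorem hexagon_diagonal_min (ℓ : Fin 6 → ℝ) (hpos : ∀ i, 0 < ℓ i)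
    (h01 : ℓ 0 ≤ ℓ 1) (h12 : ℓ 1 ≤ ℓ 2) (h23 : ℓ 2 ≤ ℓ 3)
    (h34 : ℓ 3 ≤ ℓ 4) (h45 : ℓ 4 ≤ ℓ 5)
    (hne : ℓ 5 ≤ ℓ 0 + ℓ 1 + ℓ 2 + ℓ 3 + ℓ 4) :
    IsLeast {d : ℝ | ∃ A : Fin 6 → ℂ,
        IsHexagonRealization ℓ A ∧ dist (A 0) (A 3) = d}
      (max 0 (max (ℓ 2 - ℓ 1 - ℓ 0) (ℓ 5 - ℓ 4 - ℓ 3))) := by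
  have p0 := hpos 0
  have p1 := hpos 1
  have p2 := hpos 2
  have p3 := hpos 3
  have p4 := hpos 4
  have p5 := hpos 5
  constructor
  · obtain ⟨d, hd⟩ : ∃ d, d = max 0 (max (ℓ 2 - ℓ 1 - ℓ 0) (ℓ 5 - ℓ 4 - ℓ 3)) := ⟨_, rfl⟩
    have d0 : 0 ≤ d := hd ▸ le_max_left _ _
    have d1 : ℓ 2 - ℓ 1 - ℓ 0 ≤ d := hd ▸ (le_max_left _ _).trans (le_max_right _ _)
    have d2 : ℓ 5 - ℓ 4 - ℓ 3 ≤ d := hd ▸ (le_max_right _ _).trans (le_max_right _ _)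
    have d3 : d ≤ ℓ 0 + ℓ 1 + ℓ 2 := by
      rw [hd]; refine max_le ?_ (max_le ?_ ?_) <;> linarith
    have d4 : d ≤ ℓ 3 + ℓ 4 + ℓ 5 := by linarith
    rw [← hd]
    have e1 : dist (0 : ℂ) (d : ℂ) = d := by simp [dist_eq_norm, abs_of_nonneg d0]
    have e2 : dist (d : ℂ) (0 : ℂ) = d := by rw [dist_comm, e1]
    obtain ⟨P, Q, hP, hPQ, hQ⟩ := hex_quad 0 d (ℓ 0) (ℓ 1) (ℓ 2) p0.le p1.le p2.le
      (by linarith) (by linarith) (by linarith) (by linarith)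
    obtain ⟨R, S, hR, hRS, hS⟩ := hex_quad d 0 (ℓ 3) (ℓ 4) (ℓ 5) p3.le p4.le p5.le
      (by linarith) (by linarith) (by linarith) (by linarith)
    refine ⟨![0, P, Q, d, R, S], ?_, e1⟩
    intro i
    fin_cases i
    · exact hP
    · exact hPQ
    · exact hQ
    · exact hR
    · exact hRS
    · exact hS
  · rintro d ⟨A, hA, rfl⟩
    have a0 : dist (A 0) (A 1) = ℓ 0 := hA 0
    have a1 : dist (A 1) (A 2) = ℓ 1 := hA 1
    have a2 : dist (A 2) (A 3) = ℓ 2 := hA 2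
    have a3 : dist (A 3) (A 4) = ℓ 3 := hA 3
    have a4 : dist (A 4) (A 5) = ℓ 4 := hA 4
    have a5 : dist (A 5) (A 0) = ℓ 5 := hA 5
    refine max_le dist_nonneg (max_le ?_ ?_)
    · have := dist_triangle4 (A 2) (A 1) (A 0) (A 3)
      rw [dist_comm (A 2) (A 1), dist_comm (A 1) (A 0)] at this
      linarith
    · have := dist_triangle4 (A 5) (A 4) (A 3) (A 0)
      rw [dist_comm (A 5) (A 4), dist_comm (A 4) (A 3), dist_comm (A 3) (A 0)] at this
      linarith
end

section
/- (Reachable distances of a planar polygonal chain.) Let m ≥ 1 be an integer, c : Fin m → ℝ with c i > 0 for all i, and d ∈ ℝ. Then there exists a chain A : Fin (m+1) → ℂ with A 0 = 0, dist (A i.castSucc) (A i.succ) = c i for all i : Fin m, and dist (A 0) (A (Fin.last m)) = d, if and only if 0 ≤ d, 2 · (max over i of c i) − Σ_i c i ≤ d, and d ≤ Σ_i c i. -/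
theorem two_circle_aux (z : ℂ) (a r : ℝ) (ha : 0 ≤ a) (hr : 0 ≤ r)
    (h1 : ‖z‖ - a ≤ r) (h2 : a - ‖z‖ ≤ r) (h3 : r ≤ ‖z‖ + a) :
    ∃ w : ℂ, ‖w‖ = r ∧ ‖w - z‖ = a := by
  by_cases hz : z = 0
  · subst hz
    simp only [norm_zero, sub_zero, zero_add] at *
    refine ⟨(r : ℂ), ?_, ?_⟩
    · simp [abs_of_nonneg hr]
    · simp [abs_of_nonneg hr]; linarith
  · have hd : 0 < ‖z‖ := norm_pos_iff.mpr hz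
    obtain ⟨d, hdd⟩ : ∃ d, d = ‖z‖ := ⟨_, rfl⟩
    rw [← hdd] at h1 h2 h3 hd
    obtain ⟨x, hx⟩ : ∃ x : ℝ, x * (2 * d) = d ^ 2 + r ^ 2 - a ^ 2 :=
      ⟨(d ^ 2 + r ^ 2 - a ^ 2) / (2 * d), by field_simp⟩
    have hxr : 0 ≤ r ^ 2 - x ^ 2 := by
      have p1 : 0 ≤ (a - (d - r)) * (a + (d - r)) :=
        mul_nonneg (by linarith) (by linarith)
      have p2 : 0 ≤ (d + r - a) * (d + r + a) :=
        mul_nonneg (by linarith) (by linarith)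
      have p3 := mul_nonneg p1 p2
      have p4 : (a - (d - r)) * (a + (d - r)) * ((d + r - a) * (d + r + a))
          = (4 * d ^ 2) * (r ^ 2 - x ^ 2) := by
        have : (x * (2 * d)) ^ 2 = (d ^ 2 + r ^ 2 - a ^ 2) ^ 2 := by rw [hx]
        linear_combination this
      rw [p4] at p3
      exact nonneg_of_mul_nonneg_right p3 (by positivity)
    have hy := Real.sq_sqrt hxr
    set y := Real.sqrt (r ^ 2 - x ^ 2) with hydef
    have hdc : (d : ℂ) ≠ 0 := by exact_mod_cast hd.ne'
    have hu : ‖z / (d : ℂ)‖ = 1 := by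
      rw [norm_div, Complex.norm_real, ← hdd, Real.norm_of_nonneg hd.le, div_self hd.ne']
    refine ⟨z / d * ⟨x, y⟩, ?_, ?_⟩
    · rw [norm_mul, hu, one_mul, Complex.norm_def, Complex.normSq_mk,
        show x * x + y * y = r ^ 2 by linarith, Real.sqrt_sq hr]
    · have : z / d * ⟨x, y⟩ - z = z / d * ⟨x - d, y⟩ := by
        have e : (⟨x - d, y⟩ : ℂ) = ⟨x, y⟩ - (d : ℂ) := by
          apply Complex.ext <;> simp
        rw [e, mul_sub, div_mul_cancel₀ _ hdc]
      rw [this, norm_mul, hu, one_mul, Complex.norm_def, Complex.normSq_mk,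
        show (x - d) * (x - d) + y * y = a ^ 2 by linarith, Real.sqrt_sq ha]

theorem chain_exists_aux (m : ℕ) : ∀ (c : Fin m → ℝ), (∀ i, 0 ≤ c i) → ∀ z : ℂ,
    ‖z‖ ≤ ∑ i, c i → (∀ i, 2 * c i - ∑ i, c i ≤ ‖z‖) →
    ∃ A : Fin (m + 1) → ℂ, A 0 = 0 ∧
        (∀ i : Fin m, dist (A i.castSucc) (A i.succ) = c i) ∧ A (Fin.last m) = z := by
  induction m with
  | zero =>
    intro c _ z hz _
    have : z = 0 := by simpa using hz
    exact ⟨fun _ => 0, rfl, fun i => i.elim0, this.symm⟩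
  | succ m ih =>
    intro c hc z hz hi
    rw [Fin.sum_univ_castSucc] at hz hi
    have hl := hi (Fin.last m)
    have ha := hc (Fin.last m)
    set a := c (Fin.last m)
    set S := ∑ i : Fin m, c i.castSucc with hS
    have hS0 : 0 ≤ S := Finset.sum_nonneg fun i _ => hc _
    have hn := norm_nonneg z
    obtain ⟨w, hw, hwz⟩ := two_circle_aux z a (min S (‖z‖ + a)) ha
      (le_min hS0 (by linarith)) (le_min (by linarith) (by linarith))
      (le_min (by linarith) (by linarith)) (min_le_right _ _)
    obtain ⟨A, h0, hA, hlast⟩ := ih (fun i => c i.castSucc) (fun i => hc _) w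
      (by rw [hw]; exact min_le_left _ _)
      (by
        intro i
        rw [hw]
        have h1 : c i.castSucc ≤ S :=
          Finset.single_le_sum (f := fun i : Fin m => c i.castSucc)
            (fun i _ => hc _) (Finset.mem_univ i)
        have h2 := hi i.castSucc
        exact le_min (by linarith) (by linarith))
    refine ⟨Fin.snoc A z, ?_, ?_, by simp⟩
    · rw [← Fin.castSucc_zero, Fin.snoc_castSucc, h0]
    · intro i
      refine Fin.lastCases ?_ (fun j => ?_) i
      · rw [Fin.snoc_castSucc, Fin.succ_last, Fin.snoc_last, hlast, dist_eq_norm, hwz]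
      · rw [Fin.snoc_castSucc, Fin.succ_castSucc, Fin.snoc_castSucc, hA j]

theorem chain_bounds_aux (m : ℕ) : ∀ (c : Fin m → ℝ) (A : Fin (m + 1) → ℂ),
    (∀ i : Fin m, dist (A i.castSucc) (A i.succ) = c i) →
    dist (A 0) (A (Fin.last m)) ≤ ∑ i, c i ∧
    ∀ i, 2 * c i - ∑ i, c i ≤ dist (A 0) (A (Fin.last m)) := by
  induction m with
  | zero =>
    intro c A _
    exact ⟨by simp, fun i => i.elim0⟩
  | succ m ih =>
    intro c A hA
    obtain ⟨h1, h2⟩ := ih (fun i => c i.castSucc) (fun i => A i.castSucc)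
      (fun i => by rw [← hA i.castSucc, Fin.succ_castSucc])
    have hl := hA (Fin.last m)
    rw [Fin.succ_last] at hl
    simp only [Fin.castSucc_zero] at h1 h2
    rw [Fin.sum_univ_castSucc]
    have t1 := dist_triangle (A 0) (A (Fin.last m).castSucc) (A (Fin.last (m+1)))
    have t2 := dist_triangle (A 0) (A (Fin.last (m+1))) (A (Fin.last m).castSucc)
    have t3 := dist_triangle (A (Fin.last m).castSucc) (A 0) (A (Fin.last (m+1)))
    rw [dist_comm (A (Fin.last (m+1)))] at t2
    rw [dist_comm (A (Fin.last m).castSucc) (A 0)] at t3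
    refine ⟨by linarith, fun i => ?_⟩
    refine Fin.lastCases ?_ (fun j => ?_) i
    · linarith
    · have := h2 j
      linarith

/-- Reachable distances of a planar polygonal chain: a chain of `m` bars with
lengths `c` starting at the origin can end at distance `d` from its start
if and only if `0 ≤ d`, `2 · max c − ∑ c ≤ d` and `d ≤ ∑ c`. -/
theorem chain_reachable_distances (m : ℕ) (hm : 1 ≤ m)
    (c : Fin m → ℝ) (hc : ∀ i, 0 < c i) (d : ℝ) :
    (∃ A : Fin (m + 1) → ℂ, A 0 = 0 ∧
        (∀ i : Fin m, dist (A i.castSucc) (A i.succ) = c i) ∧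
        dist (A 0) (A (Fin.last m)) = d) ↔
      0 ≤ d ∧
      2 * (Finset.univ.sup' ⟨⟨0, hm⟩, Finset.mem_univ _⟩ c) - ∑ i, c i ≤ d ∧
      d ≤ ∑ i, c i := by

  constructor
  · rintro ⟨A, -, hA, rfl⟩
    obtain ⟨h1, h2⟩ := chain_bounds_aux m c A hA
    refine ⟨dist_nonneg, ?_, h1⟩
    obtain ⟨i, -, hi⟩ := Finset.exists_mem_eq_sup' (s := Finset.univ)
      ⟨⟨0, hm⟩, Finset.mem_univ _⟩ c
    rw [hi]
    exact h2 i
  · rintro ⟨h0, h1, h2⟩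
    have hn : ‖(d : ℂ)‖ = d := by rw [Complex.norm_real, Real.norm_of_nonneg h0]
    obtain ⟨A, hA0, hA, hl⟩ := chain_exists_aux m c (fun i => (hc i).le) (d : ℂ)
      (by rw [hn]; exact h2)
      (by
        intro i
        rw [hn]
        have := Finset.le_sup' c (Finset.mem_univ i)
        linarith)
    exact ⟨A, hA0, hA, by rw [hA0, hl, dist_zero_left, hn]⟩
end

section
/- (Regularity of the joint length map for the snake linkage.) Let k ≥ 1, let E = EuclideanSpace ℝ (Fin 2) be the Euclidean plane, and define the joint half-squared-length map μ : (Fin (k+1) → E) → (Fin k → ℝ) by μ(A) i = ‖A i.succ − A i.castSucc‖² / 2. If A : Fin (k+1) → E satisfies A i.castSucc ≠ A i.succ for every i : Fin k, then the Fréchet derivative fderiv ℝ μ A : (Fin (k+1) → E) →L (Fin k → ℝ) is surjective. (Consequently, every positive tuple of lengths is a regular value of μ, consistent with the dimension formula dim M_L = 2n − q.) -/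
noncomputable section

/-- The joint half-squared-length map of the snake linkage with vertices
`A 0, …, A k` in the Euclidean plane. -/
def snakeJointLengthMap (k : ℕ) :
    (Fin (k + 1) → EuclideanSpace ℝ (Fin 2)) → (Fin k → ℝ) :=
  fun A i => ‖A i.succ - A i.castSucc‖ ^ 2 / 2

/-- Regularity of the joint length map of the snake linkage: at any placement
with no degenerate (zero-length) bar, the derivative of the joint
half-squared-length map is surjective; hence every positive tuple of lengths
is a regular value. -/
theorem snake_joint_length_map_regular (k : ℕ) (hk : 1 ≤ k)
    (A : Fin (k + 1) → EuclideanSpace ℝ (Fin 2))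
    (hA : ∀ i : Fin k, A i.castSucc ≠ A i.succ) :
    Function.Surjective (fderiv ℝ (snakeJointLengthMap k) A) := by
  intro y
  set d : Fin k → EuclideanSpace ℝ (Fin 2) := fun i => A i.succ - A i.castSucc with hd
  have hd0 : ∀ i, ‖d i‖ ^ 2 ≠ 0 := fun i =>
    pow_ne_zero 2 (norm_ne_zero_iff.mpr (sub_ne_zero.mpr (hA i).symm))
  let L : Fin k → ((Fin (k + 1) → EuclideanSpace ℝ (Fin 2)) →L[ℝ]
      EuclideanSpace ℝ (Fin 2)) := fun i =>
    ContinuousLinearMap.proj (R := ℝ) (φ := fun _ => EuclideanSpace ℝ (Fin 2)) i.succ -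
      ContinuousLinearMap.proj (R := ℝ) (φ := fun _ => EuclideanSpace ℝ (Fin 2)) i.castSucc
  have hF : HasFDerivAt (snakeJointLengthMap k)
      (ContinuousLinearMap.pi fun i => (innerSL ℝ (d i)).comp (L i)) A := by
    rw [hasFDerivAt_pi']
    intro i
    have h := ((L i).hasFDerivAt (x := A)).norm_sq.const_mul (1 / 2 : ℝ)
    refine (h.congr_fderiv ?_).congr_of_eventuallyEq (Filter.Eventually.of_forall ?_)
    · ext v
      simp [L, d]
    · intro B
      simp [L, snakeJointLengthMap]
      ring
  rw [hF.fderiv]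
  let V : Fin (k + 1) → EuclideanSpace ℝ (Fin 2) := fun j =>
    Fin.induction (motive := fun _ => EuclideanSpace ℝ (Fin 2)) 0
      (fun i v => v + (y i / ‖d i‖ ^ 2) • d i) j
  have hV : ∀ i : Fin k, V i.succ - V i.castSucc = (y i / ‖d i‖ ^ 2) • d i := by
    intro i
    simp only [V, Fin.induction_succ, add_sub_cancel_left]
  refine ⟨V, ?_⟩
  funext i
  change inner ℝ (d i) (V i.succ - V i.castSucc) = y i
  rw [hV, inner_smul_right, real_inner_self_eq_norm_sq, div_mul_cancel₀ _ (hd0 i)]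
end
end

section
/- (Regularity of the joint length map for the 4-bar mechanism.) Let E = EuclideanSpace ℝ (Fin 2) be the Euclidean plane, fix A, D ∈ E, and define ν : E × E → (Fin 3 → ℝ) by ν(B, C) = (‖B − A‖²/2, ‖C − B‖²/2, ‖D − C‖²/2). Suppose B ≠ A, C ≠ B, D ≠ C, and it is not the case that both {A, B, C} and {B, C, D} are collinear (Collinear ℝ). Then the Fréchet derivative fderiv ℝ ν (B, C) : E × E →L (Fin 3 → ℝ) is surjective. (Hence for generic bar lengths the configuration space of the 4-bar mechanism with fixed vertices A, D is a regular level set, i.e., a one-dimensional manifold, making the 4-bar mechanism a curve-drawing linkage.) -/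
noncomputable section

/-- The joint half-squared-length map of the 4-bar mechanism with fixed base
points `A` and `D`: it records the half squared lengths of the bars
`AB`, `BC`, `CD` as a function of the placement `(B, C)` of the movable
vertices. -/
def fourBarJointLengthMap (A D : EuclideanSpace ℝ (Fin 2)) :
    EuclideanSpace ℝ (Fin 2) × EuclideanSpace ℝ (Fin 2) → (Fin 3 → ℝ) :=
  fun p => ![‖p.1 - A‖ ^ 2 / 2, ‖p.2 - p.1‖ ^ 2 / 2, ‖D - p.2‖ ^ 2 / 2]

theorem fb_par (z w : EuclideanSpace ℝ (Fin 2)) (hw : w ≠ 0) (h : z 0 * w 1 - z 1 * w 0 = 0) :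
    ∃ r : ℝ, z = r • w := by
  by_cases h0 : w 0 = 0
  · have h1 : w 1 ≠ 0 := by
      intro h1
      apply hw
      ext i
      fin_cases i <;> simp [h0, h1]
    refine ⟨z 1 / w 1, ?_⟩
    have hz : z 0 = 0 := by
      rw [h0] at h
      simpa [h1] using h
    ext i
    fin_cases i
    · simp [hz, h0]
    · simp [h1]
  · refine ⟨z 0 / w 0, ?_⟩
    ext i
    fin_cases i
    · simp [h0]
    · simp
      field_simp
      linarith

theorem fb_solve (u w : EuclideanSpace ℝ (Fin 2)) (h : u 0 * w 1 - u 1 * w 0 ≠ 0) (a b : ℝ) :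
    ∃ x : EuclideanSpace ℝ (Fin 2), inner ℝ u x = a ∧ inner ℝ w x = b := by
  refine ⟨!₂[(a * w 1 - b * u 1) / (u 0 * w 1 - u 1 * w 0),
    (b * u 0 - a * w 0) / (u 0 * w 1 - u 1 * w 0)], ?_, ?_⟩
  · simp [PiLp.inner_apply, Fin.sum_univ_two]
    rw [div_mul_eq_mul_div, div_mul_eq_mul_div, ← add_div, div_eq_iff h]
    ring
  · simp [PiLp.inner_apply, Fin.sum_univ_two]
    rw [div_mul_eq_mul_div, div_mul_eq_mul_div, ← add_div, div_eq_iff h]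
    ring

theorem fb_one (v : EuclideanSpace ℝ (Fin 2)) (h : v ≠ 0) (a : ℝ) :
    ∃ x : EuclideanSpace ℝ (Fin 2), inner ℝ v x = a := by
  refine ⟨(a / inner ℝ v v) • v, ?_⟩
  rw [inner_smul_right]
  exact div_mul_cancel₀ _ (inner_self_ne_zero.mpr h)

theorem fb_deriv (A D B C : EuclideanSpace ℝ (Fin 2))
    (q : EuclideanSpace ℝ (Fin 2) × EuclideanSpace ℝ (Fin 2)) :
    fderiv ℝ (fourBarJointLengthMap A D) (B, C) q =
      ![inner ℝ (B - A) q.1, inner ℝ (C - B) (q.2 - q.1), - inner ℝ (D - C) q.2] := by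
  have key : ∀ f : EuclideanSpace ℝ (Fin 2) × EuclideanSpace ℝ (Fin 2) → EuclideanSpace ℝ (Fin 2),
      ∀ f' : EuclideanSpace ℝ (Fin 2) × EuclideanSpace ℝ (Fin 2) →L[ℝ] EuclideanSpace ℝ (Fin 2),
      HasFDerivAt f f' (B, C) →
      HasFDerivAt (fun p => ‖f p‖ ^ 2 / 2) ((innerSL ℝ (f (B, C))).comp f') (B, C) := by
    intro f f' hf
    have := hf.norm_sq.mul_const (1 / 2 : ℝ)
    have e1 : (fun p => ‖f p‖ ^ 2 / 2) = fun p => ‖f p‖ ^ 2 * (1 / 2 : ℝ) := by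
      funext p
      ring
    rw [e1]
    refine this.congr_fderiv ?_
    rw [two_smul, ← two_smul ℝ, smul_smul]
    norm_num
  let F := ContinuousLinearMap.fst ℝ (EuclideanSpace ℝ (Fin 2)) (EuclideanSpace ℝ (Fin 2))
  let S := ContinuousLinearMap.snd ℝ (EuclideanSpace ℝ (Fin 2)) (EuclideanSpace ℝ (Fin 2))
  have h0 := key (fun p => p.1 - A) F (hasFDerivAt_fst.sub_const A)
  have h1 := key (fun p => p.2 - p.1) (S - F) (hasFDerivAt_snd.sub hasFDerivAt_fst)
  have h2 := key (fun p => D - p.2) (-S) (hasFDerivAt_snd.const_sub D)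
  have H : HasFDerivAt (fourBarJointLengthMap A D)
      (ContinuousLinearMap.pi ![(innerSL ℝ (B - A)).comp F, (innerSL ℝ (C - B)).comp (S - F),
        (innerSL ℝ (D - C)).comp (-S)]) (B, C) := by
    rw [hasFDerivAt_pi']
    intro i
    fin_cases i
    · exact h0
    · exact h1
    · exact h2
  rw [H.fderiv]
  ext i
  fin_cases i <;> simp [F, S, inner_sub_left, inner_sub_right]

/-- Regularity of the joint length map of the 4-bar mechanism: if no bar is
degenerate and it is not the case that both triples `{A, B, C}` and
`{B, C, D}` are collinear, then the derivative of the joint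
half-squared-length map at `(B, C)` is surjective. -/
theorem fourBar_joint_length_map_regular
    (A D B C : EuclideanSpace ℝ (Fin 2))
    (hBA : B ≠ A) (hCB : C ≠ B) (hDC : D ≠ C)
    (hcol : ¬ (Collinear ℝ ({A, B, C} : Set (EuclideanSpace ℝ (Fin 2))) ∧
               Collinear ℝ ({B, C, D} : Set (EuclideanSpace ℝ (Fin 2))))) :
    Function.Surjective (fderiv ℝ (fourBarJointLengthMap A D) (B, C)) := by
  intro t
  have key : ∃ x y : EuclideanSpace ℝ (Fin 2), inner ℝ (B - A) x = t 0 ∧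
      inner ℝ (C - B) y - inner ℝ (C - B) x = t 1 ∧ inner ℝ (D - C) y = - t 2 := by
    by_cases h1 : (B - A) 0 * (C - B) 1 - (B - A) 1 * (C - B) 0 = 0
    · by_cases h2 : (D - C) 0 * (C - B) 1 - (D - C) 1 * (C - B) 0 = 0
      · exfalso
        apply hcol
        obtain ⟨r, hr⟩ := fb_par _ _ (sub_ne_zero.mpr hCB) h1
        obtain ⟨s, hs⟩ := fb_par _ _ (sub_ne_zero.mpr hCB) h2
        constructor
        · rw [collinear_iff_of_mem (p₀ := B) (by simp)]
          refine ⟨C - B, ?_⟩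
          rintro p (rfl | rfl | rfl)
          · refine ⟨-r, ?_⟩
            rw [neg_smul, ← hr]
            simp
          · exact ⟨0, by simp⟩
          · exact ⟨1, by simp⟩
        · rw [collinear_iff_of_mem (p₀ := C) (by simp)]
          refine ⟨C - B, ?_⟩
          rintro p (rfl | rfl | rfl)
          · exact ⟨-1, by simp⟩
          · exact ⟨0, by simp⟩
          · refine ⟨s, ?_⟩
            rw [← hs]
            simp
      · obtain ⟨x, hx⟩ := fb_one _ (sub_ne_zero.mpr hBA) (t 0)
        obtain ⟨y, hy, hy'⟩ := fb_solve _ _ h2 (- t 2) (t 1 + inner ℝ (C - B) x)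
        exact ⟨x, y, hx, by rw [hy']; ring, hy⟩
    · obtain ⟨y, hy⟩ := fb_one _ (sub_ne_zero.mpr hDC) (- t 2)
      obtain ⟨x, hx, hx'⟩ := fb_solve _ _ h1 (t 0) (inner ℝ (C - B) y - t 1)
      exact ⟨x, y, hx, by rw [hx']; ring, hy⟩
  obtain ⟨x, y, e0, e1, e2⟩ := key
  refine ⟨(x, y), ?_⟩
  rw [fb_deriv]
  dsimp only
  rw [inner_sub_right, e0, e1, e2, neg_neg]
  ext i
  fin_cases i <;> rfl
end
end

section
/- (Existence criterion for planar polygon realizations.) Let n ≥ 3 and ℓ : Fin n → ℝ with ℓ i > 0 for all i. Then there exists A : Fin n → ℂ with dist (A i) (A (i+1)) = ℓ i for all i : Fin n (index i+1 taken modulo n) if and only if 2 · (max over i of ℓ i) ≤ Σ_i ℓ i; that is, the configuration space of the planar n-gon linkage with side lengths ℓ is nonempty if and only if every side length is at most the sum of all the others. -/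
lemma triangle_exists (w : ℂ) (a r : ℝ) (h1 : |‖w‖ - a| ≤ r) (h2 : r ≤ ‖w‖ + a) (ha : 0 ≤ a) :
    ∃ z : ℂ, ‖z‖ = a ∧ ‖w - z‖ = r := by
  let u : ℂ := Complex.exp (Complex.arg w * Complex.I)
  have hu : ‖u‖ = 1 := Complex.norm_exp_ofReal_mul_I _
  have hw : (‖w‖ : ℂ) * u = w := Complex.norm_mul_exp_arg_mul_I w
  let f : ℝ → ℝ := fun t => ‖w - a * u * Complex.exp (t * Complex.I)‖
  have hf : Continuous f := by fun_prop
  have f0 : f 0 = |‖w‖ - a| := by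
    have : w - a * u * Complex.exp ((0 : ℝ) * Complex.I) = ((‖w‖ - a : ℝ) : ℂ) * u := by
      push_cast
      rw [sub_mul, hw]; simp
    simp only [f]
    rw [this, norm_mul, hu, Complex.norm_real, mul_one, Real.norm_eq_abs]
  have f1 : f Real.pi = ‖w‖ + a := by
    have : w - a * u * Complex.exp ((Real.pi : ℝ) * Complex.I) = ((‖w‖ + a : ℝ) : ℂ) * u := by
      push_cast
      rw [add_mul, hw, Complex.exp_pi_mul_I]; ring
    simp only [f]
    rw [this, norm_mul, hu, Complex.norm_real, mul_one, Real.norm_eq_abs]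
    exact abs_of_nonneg (by positivity)
  obtain ⟨t, -, ht⟩ := intermediate_value_Icc Real.pi_pos.le hf.continuousOn
    (show r ∈ Set.Icc (f 0) (f Real.pi) by rw [f0, f1]; exact ⟨h1, h2⟩)
  refine ⟨a * u * Complex.exp (t * Complex.I), ?_, ht⟩
  rw [norm_mul, norm_mul, hu, Complex.norm_exp_ofReal_mul_I, Complex.norm_real, Real.norm_eq_abs,
    abs_of_nonneg ha]; ring

lemma vectors_exist {ι : Type*} [DecidableEq ι] (l : ι → ℝ) (hl : ∀ i, 0 ≤ l i) (s : Finset ι) :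
    ∀ w : ℂ, ‖w‖ ≤ ∑ i ∈ s, l i → (∀ i ∈ s, 2 * l i ≤ ‖w‖ + ∑ i ∈ s, l i) →
    ∃ v : ι → ℂ, (∀ i ∈ s, ‖v i‖ = l i) ∧ ∑ i ∈ s, v i = w := by
  induction s using Finset.induction_on with
  | empty =>
    intro w h _
    refine ⟨fun _ => 0, by simp, ?_⟩
    simp at h
    simp [h]
  | insert a t hat ih =>
    intro w h1 h2
    rw [Finset.sum_insert hat] at h1
    simp only [Finset.sum_insert hat] at h2
    have ha := h2 a (Finset.mem_insert_self _ _)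
    have hla := hl a
    have hw := norm_nonneg w
    have hS : 0 ≤ ∑ i ∈ t, l i := Finset.sum_nonneg fun i _ => hl i
    obtain ⟨z, hz, hz'⟩ := triangle_exists w (l a) (min (‖w‖ + l a) (∑ i ∈ t, l i))
      (le_min (abs_le.2 ⟨by linarith, by linarith⟩) (abs_le.2 ⟨by linarith, by linarith⟩))
      (min_le_left _ _) hla
    obtain ⟨v, hv, hvs⟩ := ih (w - z) (by rw [hz']; exact min_le_right _ _) (by
      intro i hi
      have h3 := h2 i (Finset.mem_insert_of_mem hi)
      have h4 := Finset.single_le_sum (f := l) (fun j _ => hl j) hi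
      rw [hz', ← sub_le_iff_le_add]
      exact le_min (by linarith) (by linarith))
    have hne : ∀ i ∈ t, i ≠ a := fun i hi h => hat (h ▸ hi)
    refine ⟨Function.update v a z, ?_, ?_⟩
    · intro i hi
      rcases Finset.mem_insert.1 hi with rfl | hi
      · simpa using hz
      · rw [Function.update_of_ne (hne i hi)]; exact hv i hi
    · rw [Finset.sum_insert hat, Function.update_self,
        Finset.sum_congr rfl (fun i hi => Function.update_of_ne (hne i hi) z v), hvs]
      ring

/-- Existence criterion for planar polygon realizations: an `n`-gon with
prescribed positive side lengths `ℓ` exists in the plane `ℂ` if and only if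
twice the largest side length is at most the sum of all the side lengths,
i.e., every side is at most the sum of all the others. -/
theorem polygon_realization_exists_iff (n : ℕ) (hn : 3 ≤ n)
    (ℓ : Fin n → ℝ) (hpos : ∀ i, 0 < ℓ i) :
    (∃ A : Fin n → ℂ, ∀ i : Fin n,
        dist (A i) (A ⟨((i : ℕ) + 1) % n, Nat.mod_lt _ (by omega)⟩) = ℓ i) ↔
      2 * (Finset.univ.sup' ⟨⟨0, by omega⟩, Finset.mem_univ _⟩ ℓ) ≤ ∑ i, ℓ i := by
  have key : 2 * (Finset.univ.sup' ⟨⟨0, by omega⟩, Finset.mem_univ _⟩ ℓ) ≤ ∑ i, ℓ i ↔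
      ∀ i, 2 * ℓ i ≤ ∑ i, ℓ i := by
    rw [← le_div_iff₀' (by norm_num : (0:ℝ) < 2)]
    refine (Finset.sup'_le_iff _ _).trans ?_
    simp only [Finset.mem_univ, true_implies, le_div_iff₀' (by norm_num : (0:ℝ) < 2)]
  rw [key]
  constructor
  · rintro ⟨A, hA⟩ i
    obtain ⟨m, rfl⟩ : ∃ m, n = m + 1 := ⟨n - 1, by omega⟩
    have hs : ∀ j : Fin (m + 1),
        (⟨((j : ℕ) + 1) % (m + 1), Nat.mod_lt _ (by omega)⟩ : Fin (m + 1)) = j + 1 := by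
      intro j
      ext
      simp [Fin.val_add]
    simp only [hs, dist_eq_norm] at hA
    have h0 : ∑ j, (A j - A (j + 1)) = 0 := by
      rw [Finset.sum_sub_distrib, sub_eq_zero]
      exact (Equiv.sum_comp (Equiv.addRight (1 : Fin (m + 1))) A).symm
    rw [← Finset.add_sum_erase _ _ (Finset.mem_univ i)] at h0
    rw [← Finset.add_sum_erase _ _ (Finset.mem_univ i)]
    have h1 : ‖A i - A (i + 1)‖ ≤ ∑ j ∈ Finset.univ.erase i, ‖A j - A (j + 1)‖ := by
      rw [eq_neg_of_add_eq_zero_left h0, norm_neg]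
      exact norm_sum_le _ _
    simp only [hA] at h1
    linarith
  · intro h
    obtain ⟨v, hv, hs⟩ := vectors_exist ℓ (fun i => (hpos i).le) Finset.univ 0
      (by simpa using Finset.sum_nonneg fun i _ => (hpos i).le) (by simpa using h)
    let g : ℕ → ℂ := fun j => if hj : j < n then v ⟨j, hj⟩ else 0
    have hg : ∀ i : Fin n, g i = v i := fun i => by simp [g]
    have hB : ∑ j ∈ Finset.range n, g j = 0 := by
      rw [Finset.sum_range, ← hs]
      exact Finset.sum_congr rfl fun i _ => hg i
    refine ⟨fun k => ∑ j ∈ Finset.range k, g j, fun i => ?_⟩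
    have h2 : ∑ j ∈ Finset.range (((i : ℕ) + 1) % n), g j
        = ∑ j ∈ Finset.range ((i : ℕ) + 1), g j := by
      rcases Nat.lt_or_ge ((i : ℕ) + 1) n with h3 | h3
      · rw [Nat.mod_eq_of_lt h3]
      · have h4 : (i : ℕ) + 1 = n := by omega
        rw [h4, Nat.mod_self, hB]; simp
    simp only [h2]
    rw [Finset.sum_range_succ, hg, dist_self_add_right]
    exact hv i (Finset.mem_univ i)
end
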